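/- q-Leibniz formula (left version): let A be an associative k-algebra, a, b in A, q, ζ in k and r ≥ 1. Then [a^r, b]_{q^r} = Σ_{i=0}^{r-1} q^i · binom(r,i)_ζ · [a, ⋯[a, [a, b]_q]_{qζ} ⋯]_{qζ^{r-i-1}} · a^i, where the iterated commutator has r - i occurrences of a. -/

import Mathlib

/-- The `q`-commutator `[a,b]_q := a*b - q • (b*a)`. -/
def qComm {k A : Type*} [Field k] [Ring A] [Algebra k A] (q : k) (a b : A) : A :=
  a * b - q • (b * a)

/-- The Gaussian (`ζ`-)binomial coefficient `binom(n,i)_ζ`, i.e. the evaluation at `ζ`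
of the Gaussian binomial polynomial, defined via the `q`-Pascal recursion. -/
def qBinom {k : Type*} [Field k] (ζ : k) : ℕ → ℕ → k
  | _, 0 => 1
  | 0, _ + 1 => 0
  | n + 1, i + 1 => ζ ^ (i + 1) * qBinom ζ n (i + 1) + qBinom ζ n i

/-- The iterated `q`-commutator `[a, ⋯[a, [a, b]_q]_{qζ} ⋯]_{qζ^{m-1}}`
with `m` occurrences of `a`. -/
def qCommIterLeft {k A : Type*} [Field k] [Ring A] [Algebra k A]
    (q ζ : k) (a b : A) : ℕ → A
  | 0 => b
  | m + 1 => qComm (q * ζ ^ m) a (qCommIterLeft q ζ a b m)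

/-!
Writing `a * b = [a, b]_q + q • (b * a)` at the innermost factor gives
`a ^ (r + 1) * b = a ^ r * [a, b]_q + q • (a ^ r * b * a)`. Expanding `a ^ r * [a, b]_q` with
parameter `q * ζ` and `a ^ r * b` with parameter `q` produces the same family of iterated
commutators, with coefficients that combine by the `q`-Pascal recursion. The top term of the
resulting expansion of `a ^ r * b` is `q ^ r • (b * a ^ r)`.
-/

section qBinom

variable {k : Type*} [Field k] (ζ : k)

@[simp]
theorem qBinom_zero_right (n : ℕ) : qBinom ζ n 0 = 1 := by
  cases n <;> rfl

theorem qBinom_succ_succ (n i : ℕ) :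
    qBinom ζ (n + 1) (i + 1) = ζ ^ (i + 1) * qBinom ζ n (i + 1) + qBinom ζ n i :=
  rfl

theorem qBinom_eq_zero_of_lt {n i : ℕ} (h : n < i) : qBinom ζ n i = 0 := by
  induction n generalizing i with
  | zero =>
    obtain ⟨i, rfl⟩ := Nat.exists_eq_add_of_lt h
    rfl
  | succ n ih =>
    obtain _ | i := i
    · exact absurd h (Nat.not_lt_zero _)
    · rw [qBinom_succ_succ, ih (by omega), ih (by omega), mul_zero, add_zero]

@[simp]
theorem qBinom_self (n : ℕ) : qBinom ζ n n = 1 := by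
  induction n with
  | zero => rfl
  | succ n ih =>
    rw [qBinom_succ_succ, qBinom_eq_zero_of_lt ζ n.lt_succ_self, ih, mul_zero, zero_add]

theorem sum_qBinom_succ_smul {M : Type*} [AddCommMonoid M] [Module k M]
    (q : k) (n : ℕ) (f : ℕ → M) :
    ∑ i ∈ Finset.range (n + 2), (q ^ i * qBinom ζ (n + 1) i) • f i =
      ∑ i ∈ Finset.range (n + 1), ((q * ζ) ^ i * qBinom ζ n i) • f i +
        q • ∑ i ∈ Finset.range (n + 1), (q ^ i * qBinom ζ n i) • f (i + 1) := by
  have pascal (i : ℕ) : (q ^ (i + 1) * qBinom ζ (n + 1) (i + 1)) • f (i + 1) =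
      ((q * ζ) ^ (i + 1) * qBinom ζ n (i + 1)) • f (i + 1) +
        q • (q ^ i * qBinom ζ n i) • f (i + 1) := by
    rw [qBinom_succ_succ, smul_smul, ← add_smul]
    ring_nf
  have extend : ∑ i ∈ Finset.range (n + 1), ((q * ζ) ^ i * qBinom ζ n i) • f i =
      ∑ i ∈ Finset.range (n + 2), ((q * ζ) ^ i * qBinom ζ n i) • f i := by
    rw [Finset.sum_range_succ _ (n + 1), qBinom_eq_zero_of_lt ζ n.lt_succ_self, mul_zero,
      zero_smul, add_zero]
  rw [extend, Finset.sum_range_succ', Finset.sum_range_succ' _ (n + 1), Finset.smul_sum,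
    Finset.sum_congr rfl fun i _ => pascal i, Finset.sum_add_distrib, add_right_comm]
  simp only [pow_zero, qBinom_zero_right]

end qBinom

section qComm

variable {k A : Type*} [Field k] [Ring A] [Algebra k A]

theorem mul_eq_qComm_add (q : k) (a b : A) : a * b = qComm q a b + q • (b * a) :=
  (sub_add_cancel _ _).symm

theorem pow_succ_mul_eq_pow_mul_qComm_add (q : k) (a b : A) (n : ℕ) :
    a ^ (n + 1) * b = a ^ n * qComm q a b + q • (a ^ n * b * a) := by
  rw [pow_succ, mul_assoc, mul_eq_qComm_add q a b, mul_add, mul_smul_comm, ← mul_assoc]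

@[simp]
theorem qCommIterLeft_zero (q ζ : k) (a b : A) : qCommIterLeft q ζ a b 0 = b :=
  rfl

theorem qCommIterLeft_succ (q ζ : k) (a b : A) (m : ℕ) :
    qCommIterLeft q ζ a b (m + 1) = qComm (q * ζ ^ m) a (qCommIterLeft q ζ a b m) :=
  rfl

theorem qCommIterLeft_succ' (q ζ : k) (a b : A) (m : ℕ) :
    qCommIterLeft q ζ a b (m + 1) = qCommIterLeft (q * ζ) ζ a (qComm q a b) m := by
  induction m with
  | zero => rw [qCommIterLeft_succ, pow_zero, mul_one, qCommIterLeft_zero, qCommIterLeft_zero]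
  | succ m ih => rw [qCommIterLeft_succ, ih, pow_succ', ← mul_assoc, ← qCommIterLeft_succ]

theorem pow_mul_eq_sum_qCommIterLeft (q ζ : k) (a b : A) (n : ℕ) :
    a ^ n * b = ∑ i ∈ Finset.range (n + 1),
      (q ^ i * qBinom ζ n i) • (qCommIterLeft q ζ a b (n - i) * a ^ i) := by
  induction n generalizing b q with
  | zero => simp
  | succ n ih =>
    have expand_qComm : a ^ n * qComm q a b = ∑ i ∈ Finset.range (n + 1),
        ((q * ζ) ^ i * qBinom ζ n i) • (qCommIterLeft q ζ a b (n + 1 - i) * a ^ i) := by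
      rw [ih (q * ζ)]
      refine Finset.sum_congr rfl fun i hi => ?_
      rw [Nat.succ_sub (Finset.mem_range_succ_iff.mp hi), qCommIterLeft_succ']
    have expand_mul : a ^ n * b * a = ∑ i ∈ Finset.range (n + 1),
        (q ^ i * qBinom ζ n i) •
          (qCommIterLeft q ζ a b (n + 1 - (i + 1)) * a ^ (i + 1)) := by
      simp only [ih q b, Finset.sum_mul, smul_mul_assoc, mul_assoc, pow_succ,
        Nat.add_sub_add_right]
    rw [pow_succ_mul_eq_pow_mul_qComm_add q, expand_qComm, expand_mul, ← sum_qBinom_succ_smul ζ q n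
      fun i => qCommIterLeft q ζ a b (n + 1 - i) * a ^ i]

end qComm

/-- The `q`-Leibniz formula (left version):
`[a^r, b]_{q^r} = Σ_{i=0}^{r-1} q^i · binom(r,i)_ζ · [a,⋯[a,[a,b]_q]_{qζ}⋯]_{qζ^{r-i-1}} · a^i`. -/
theorem qComm_pow_left {k A : Type*} [Field k] [Ring A] [Algebra k A]
    (a b : A) (q ζ : k) (r : ℕ) (hr : 1 ≤ r) :
    qComm (q ^ r) (a ^ r) b =
      ∑ i ∈ Finset.range r,
        (q ^ i * qBinom ζ r i) • (qCommIterLeft q ζ a b (r - i) * a ^ i) := by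
  have top_term : (q ^ r * qBinom ζ r r) • (qCommIterLeft q ζ a b (r - r) * a ^ r) =
      q ^ r • (b * a ^ r) := by
    rw [qBinom_self, mul_one, Nat.sub_self, qCommIterLeft_zero]
  rw [qComm, pow_mul_eq_sum_qCommIterLeft q ζ, Finset.sum_range_succ, top_term,
    add_sub_cancel_right]
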